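/- arXiv:1701.00203 — 3 statements merged into one kernel-verified Lean document; each statement's English description precedes it below -/
import Mathlib

section
/- Let n ≥ 2 be an integer and τ > 0 a real number. Let f : ℝ → ℝ be continuous, nonnegative on [0, τ], strictly positive on the open interval (0, τ), and such that the function x ↦ f(x)^(1/(n−1)) is concave on the interval [0, τ]. Then ∫₀^τ y·f(y) dy ≤ (n/(n+1))·τ·∫₀^τ f(y) dy. -/
open intervalIntegral Set

/-!
Write `p = n - 1` and `c = (p + 1) / (p + 2) * τ`. A nonnegative concave function divided by `x` is
antitone on `(0, τ]`, so `f x / x ^ p` is antitone there. Hence `f` lies above the cone profile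
`f c / c ^ p * y ^ p` to the left of `c` and below it to the right, so replacing `f` by the profile
can only increase `∫ (y - c) * f y`. For the profile itself this integral vanishes, as `c` is the
centre of mass of the density `y ^ p` on `[0, τ]`.
-/

section ConcaveQuotient

theorem antitoneOn_div_id_of_concaveOn {𝕜 : Type*} [Field 𝕜] [LinearOrder 𝕜] [IsStrictOrderedRing 𝕜]
    {s : Set 𝕜} {g : 𝕜 → 𝕜} (hg : ConcaveOn 𝕜 s g) (hs : 0 ∈ s) (hg₀ : 0 ≤ g 0) :
    AntitoneOn (fun x => g x / x) (s ∩ Ioi 0) := by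
  have hslope : AntitoneOn (slope g 0) (s ∩ Ioi 0) := hg.antitoneOn_slope_gt hs
  have hconst : AntitoneOn (fun x => g 0 / x) (s ∩ Ioi 0) := fun x hx y _ hxy =>
    div_le_div_of_nonneg_left hg₀ hx.2 hxy
  refine (hslope.add hconst).congr fun x _ => ?_
  simp only [slope_def_field, sub_zero, ← add_div, sub_add_cancel]

variable {p : ℝ} {s : Set ℝ} {f : ℝ → ℝ}

theorem antitoneOn_div_rpow_of_concaveOn_rpow_inv (hp : 0 < p) (hs : 0 ∈ s)
    (hnonneg : ∀ x ∈ s, 0 ≤ f x) (hconc : ConcaveOn ℝ s (fun x => f x ^ p⁻¹)) :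
    AntitoneOn (fun x => f x / x ^ p) (s ∩ Ioi 0) := by
  have hroot_nonneg : ∀ x ∈ s, 0 ≤ f x ^ p⁻¹ := fun x hx => Real.rpow_nonneg (hnonneg x hx) _
  have hroot := antitoneOn_div_id_of_concaveOn hconc hs (hroot_nonneg 0 hs)
  have hpow : AntitoneOn (fun x => (f x ^ p⁻¹ / x) ^ p) (s ∩ Ioi 0) := fun x hx y hy hxy =>
    Real.rpow_le_rpow (div_nonneg (hroot_nonneg y hy.1) hy.2.le) (hroot hx hy hxy) hp.le
  refine hpow.congr fun x hx => ?_
  simp only [Real.div_rpow (hroot_nonneg x hx.1) hx.2.le,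
    Real.rpow_inv_rpow (hnonneg x hx.1) hp.ne']

end ConcaveQuotient

section Integrability

variable {a b p : ℝ} {f g : ℝ → ℝ}

theorem le_two_mul_apply_midpoint_of_concaveOn (hg : ConcaveOn ℝ (Icc a b) g)
    (hnonneg : ∀ x ∈ Icc a b, 0 ≤ g x) {x : ℝ} (hx : x ∈ Icc a b) :
    g x ≤ 2 * g ((a + b) / 2) := by
  have hx' : a + b - x ∈ Icc a b := ⟨by linarith [hx.2], by linarith [hx.1]⟩
  have hmid : (1 / 2 : ℝ) • x + (1 / 2 : ℝ) • (a + b - x) = (a + b) / 2 := by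
    simp only [smul_eq_mul]; ring
  have haverage_le := hg.2 hx hx' one_half_pos.le one_half_pos.le (add_halves 1)
  rw [hmid, smul_eq_mul, smul_eq_mul] at haverage_le
  linarith [hnonneg _ hx']

theorem intervalIntegrable_of_concaveOn_rpow_inv (hab : a ≤ b) (hp : 0 < p)
    (hnonneg : ∀ x ∈ Icc a b, 0 ≤ f x) (hconc : ConcaveOn ℝ (Icc a b) (fun x => f x ^ p⁻¹)) :
    IntervalIntegrable f MeasureTheory.volume a b := by
  have hroot_nonneg : ∀ x ∈ Icc a b, 0 ≤ f x ^ p⁻¹ := fun x hx =>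
    Real.rpow_nonneg (hnonneg x hx) _
  have hroot_rpow : ∀ x ∈ Icc a b, (f x ^ p⁻¹) ^ p = f x := fun x hx =>
    Real.rpow_inv_rpow (hnonneg x hx) hp.ne'
  have hcont : ContinuousOn f (Ioo a b) := by
    have hroot_cont : ContinuousOn (fun x => f x ^ p⁻¹) (Ioo a b) :=
      interior_Icc (a := a) (b := b) ▸ hconc.continuousOn_interior
    exact (hroot_cont.rpow_const fun _ _ => Or.inr hp.le).congr fun x hx =>
      (hroot_rpow x (Ioo_subset_Icc_self hx)).symm
  have hbound : ∀ x ∈ Ioo a b, ‖f x‖ ≤ (2 * f ((a + b) / 2) ^ p⁻¹) ^ p := fun x hx => by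
    have hx := Ioo_subset_Icc_self hx
    rw [Real.norm_of_nonneg (hnonneg x hx), ← hroot_rpow x hx]
    exact Real.rpow_le_rpow (hroot_nonneg x hx)
      (le_two_mul_apply_midpoint_of_concaveOn hconc hroot_nonneg hx) hp.le
  rw [intervalIntegrable_iff_integrableOn_Ioo_of_le hab]
  exact .of_bound measure_Ioo_lt_top (hcont.aestronglyMeasurable measurableSet_Ioo) _
    (MeasureTheory.ae_restrict_of_forall_mem measurableSet_Ioo hbound)

end Integrability

section CentreOfMass

theorem integral_sub_mul {a b : ℝ} {f : ℝ → ℝ}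
    (hf : IntervalIntegrable f MeasureTheory.volume a b) (c : ℝ) :
    ∫ y in a..b, (y - c) * f y = (∫ y in a..b, y * f y) - c * ∫ y in a..b, f y := by
  have hmul : IntervalIntegrable (fun y => y * f y) MeasureTheory.volume a b :=
    hf.continuousOn_mul continuousOn_id
  simp only [sub_mul]
  rw [integral_sub hmul (hf.const_mul c), integral_const_mul]

theorem integral_sub_mul_le_of_antitoneOn_div {a b c : ℝ} {f w : ℝ → ℝ} (hc : c ∈ Ioo a b)
    (hf : IntervalIntegrable f MeasureTheory.volume a b)
    (hw : IntervalIntegrable w MeasureTheory.volume a b) (hw_pos : ∀ y ∈ Ioo a b, 0 < w y)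
    (hanti : AntitoneOn (fun y => f y / w y) (Ioo a b)) :
    ∫ y in a..b, (y - c) * f y ≤ f c / w c * ∫ y in a..b, (y - c) * w y := by
  have hsub : ContinuousOn (fun y => y - c) (uIcc a b) := by fun_prop
  rw [← integral_const_mul]
  refine integral_mono_on_of_le_Ioo (hc.1.trans hc.2).le (hf.continuousOn_mul hsub)
    ((hw.continuousOn_mul hsub).const_mul _) fun y hy => ?_
  rw [mul_left_comm]
  rcases le_total y c with hyc | hcy
  · have hprofile_le : f c / w c * w y ≤ f y := (le_div_iff₀ (hw_pos y hy)).1 (hanti hy hc hyc)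
    exact mul_le_mul_of_nonpos_left hprofile_le (sub_nonpos.2 hyc)
  · have hle_profile : f y ≤ f c / w c * w y := (div_le_iff₀ (hw_pos y hy)).1 (hanti hc hy hcy)
    exact mul_le_mul_of_nonneg_left hle_profile (sub_nonneg.2 hcy)

variable {p τ : ℝ}

theorem integral_mul_rpow_eq_mul_integral_rpow (hp : -1 < p) (hτ : 0 ≤ τ) :
    ∫ y in (0 : ℝ)..τ, y * y ^ p = (p + 1) / (p + 2) * τ * ∫ y in (0 : ℝ)..τ, y ^ p := by
  have hp₁ : p + 1 ≠ 0 := by linarith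
  have hp₂ : p + 2 ≠ 0 := by linarith
  have hmul : ∀ y ∈ uIcc 0 τ, y * y ^ p = y ^ (p + 1) := fun y hy => by
    rw [uIcc_of_le hτ] at hy
    rw [add_comm, Real.rpow_one_add' hy.1 (by rwa [add_comm])]
  rw [integral_congr hmul, integral_rpow (.inl (by linarith)), integral_rpow (.inl hp),
    Real.zero_rpow hp₁, add_assoc p 1 1, one_add_one_eq_two, Real.zero_rpow hp₂,
    show p + 2 = p + 1 + 1 by ring, Real.rpow_add_one' hτ (by linarith)]
  field_simp
  ring

theorem integral_mul_le_of_antitoneOn_div_rpow {f : ℝ → ℝ} (hp : -1 < p) (hτ : 0 < τ)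
    (hf : IntervalIntegrable f MeasureTheory.volume 0 τ)
    (hanti : AntitoneOn (fun y => f y / y ^ p) (Ioo 0 τ)) :
    ∫ y in (0 : ℝ)..τ, y * f y ≤ (p + 1) / (p + 2) * τ * ∫ y in (0 : ℝ)..τ, f y := by
  set c := (p + 1) / (p + 2) * τ
  have hc : c ∈ Ioo 0 τ :=
    ⟨mul_pos (div_pos (by linarith) (by linarith)) hτ,
      mul_lt_of_lt_one_left hτ ((div_lt_one (by linarith)).2 (by linarith))⟩
  have hw : IntervalIntegrable (fun y => y ^ p) MeasureTheory.volume 0 τ :=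
    intervalIntegrable_rpow' hp
  refine sub_nonpos.1 ?_
  calc (∫ y in (0 : ℝ)..τ, y * f y) - c * ∫ y in (0 : ℝ)..τ, f y
      = ∫ y in (0 : ℝ)..τ, (y - c) * f y := (integral_sub_mul hf c).symm
    _ ≤ f c / c ^ p * ∫ y in (0 : ℝ)..τ, (y - c) * y ^ p :=
        integral_sub_mul_le_of_antitoneOn_div hc hf hw (fun y hy => Real.rpow_pos_of_pos hy.1 p)
          hanti
    _ = 0 := by
        rw [integral_sub_mul hw, integral_mul_rpow_eq_mul_integral_rpow hp hτ.le, sub_self,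
          mul_zero]

end CentreOfMass

theorem stmt_0_general {p τ : ℝ} (hp : 0 < p) (hτ : 0 < τ) {f : ℝ → ℝ}
    (hnonneg : ∀ x ∈ Icc 0 τ, 0 ≤ f x) (hconc : ConcaveOn ℝ (Icc 0 τ) (fun x => f x ^ p⁻¹)) :
    ∫ y in (0 : ℝ)..τ, y * f y ≤ (p + 1) / (p + 2) * τ * ∫ y in (0 : ℝ)..τ, f y := by
  have hanti : AntitoneOn (fun y => f y / y ^ p) (Icc 0 τ ∩ Ioi 0) :=
    antitoneOn_div_rpow_of_concaveOn_rpow_inv hp (left_mem_Icc.2 hτ.le) hnonneg hconc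
  exact integral_mul_le_of_antitoneOn_div_rpow (by linarith) hτ
    (intervalIntegrable_of_concaveOn_rpow_inv hτ.le hp hnonneg hconc)
    (hanti.mono fun y hy => ⟨Ioo_subset_Icc_self hy, hy.1⟩)

theorem stmt_0 (n : ℕ) (hn : 2 ≤ n) (τ : ℝ) (hτ : 0 < τ) (f : ℝ → ℝ)
    (hcont : Continuous f)
    (hnonneg : ∀ x ∈ Set.Icc (0:ℝ) τ, 0 ≤ f x)
    (hpos : ∀ x ∈ Set.Ioo (0:ℝ) τ, 0 < f x)
    (hconc : ConcaveOn ℝ (Set.Icc (0:ℝ) τ)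
      (fun x => f x ^ ((1:ℝ) / ((n : ℝ) - 1)))) :
    ∫ y in (0:ℝ)..τ, y * f y ≤ ((n : ℝ) / ((n : ℝ) + 1)) * τ * ∫ y in (0:ℝ)..τ, f y := by
  have hp : (0 : ℝ) < n - 1 := sub_pos.2 (mod_cast hn)
  convert stmt_0_general hp hτ hnonneg (by simpa only [one_div] using hconc) using 4 <;> ring
end

section
/- Let n ≥ 1 be an integer and let A, τ, S, δ′ be real numbers with A > 0, τ > 0, 0 ≤ S ≤ (n/(n+1))·τ, and δ′ > 0. Assume that (1+δ′)·A − δ′·τ ≥ S. Define θ := max{2n/(2n+1), 2δ′/(2δ′+1)} and ε′ := min{ (δ′·(1−θ)/θ)/(1 − δ′·(1−θ)/θ), 1/(2n+1) }. Then ε′ ∈ (0, 1) and A ≥ (1+ε′)·S. -/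
/-!
Compare `A` with `θ * τ`. If `A ≤ θ * τ`, replacing `τ` by `A / θ` in `S ≤ (1 + δ) * A - δ * τ`
gives `S ≤ (1 - r) * A` with `r = δ * (1 - θ) / θ`, and `1 / (1 - r) = 1 + r / (1 - r)`; the choice
`2 * δ / (2 * δ + 1) ≤ θ` makes `r ≤ 1 / 2`. If `θ * τ ≤ A`, then `2 * n / (2 * n + 1) ≤ θ` and the
identity `(1 + 1 / (2 * n + 1)) * (n / (n + 1)) = 2 * n / (2 * n + 1)` turn the bound
`S ≤ n / (n + 1) * τ` into the claim.
-/

section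

variable {K : Type*} [Field K] [LinearOrder K]

/-- The number `θ` of the paper: the value of `A / τ` at which the two estimates for `S` are
exchanged. The dimension `n` is allowed to be any element of the field. -/
def thresholdRatio (n δ : K) : K :=
  max (2 * n / (2 * n + 1)) (2 * δ / (2 * δ + 1))

/-- The relative amount `r` by which `S` falls short of `A` when `A ≤ θ * τ`, that is,
`S ≤ (1 - r) * A`. It is meant for `θ ≠ 0`. -/
def relativeDrop (δ θ : K) : K :=
  δ * (1 - θ) / θ

/-- The number `ε'` of the paper: the smaller of the gains of `A` over `S` in the two ranges
`A ≤ θ * τ` and `θ * τ ≤ A`. -/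
def uniformGain (n δ : K) : K :=
  min (relativeDrop δ (thresholdRatio n δ) / (1 - relativeDrop δ (thresholdRatio n δ)))
    (1 / (2 * n + 1))

variable [IsStrictOrderedRing K] {n δ θ r A τ S : K}

theorem two_mul_div_two_mul_add_one_lt_one (hn : 0 ≤ n) : 2 * n / (2 * n + 1) < 1 :=
  (div_lt_one (by positivity)).2 (lt_add_one _)

theorem thresholdRatio_pos (hδ : 0 < δ) : 0 < thresholdRatio n δ :=
  lt_max_of_lt_right (by positivity)

theorem thresholdRatio_lt_one (hn : 0 ≤ n) (hδ : 0 ≤ δ) : thresholdRatio n δ < 1 :=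
  max_lt (two_mul_div_two_mul_add_one_lt_one hn) (two_mul_div_two_mul_add_one_lt_one hδ)

theorem relativeDrop_pos (hδ : 0 < δ) (hθ₀ : 0 < θ) (hθ₁ : θ < 1) : 0 < relativeDrop δ θ :=
  div_pos (mul_pos hδ (sub_pos.2 hθ₁)) hθ₀

theorem relativeDrop_le_half (hδ : 0 < δ) (hθ : 2 * δ / (2 * δ + 1) ≤ θ) :
    relativeDrop δ θ ≤ 1 / 2 := by
  have hθ₀ : 0 < θ := lt_of_lt_of_le (by positivity) hθ
  rw [div_le_iff₀ (by positivity)] at hθ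
  rw [relativeDrop, div_le_iff₀ hθ₀]
  linarith

theorem relativeDrop_thresholdRatio_lt_one (hδ : 0 < δ) :
    relativeDrop δ (thresholdRatio n δ) < 1 :=
  (relativeDrop_le_half hδ (le_max_right _ _)).trans_lt one_half_lt_one

theorem uniformGain_pos (hn : 0 ≤ n) (hδ : 0 < δ) : 0 < uniformGain n δ :=
  lt_min
    (div_pos
      (relativeDrop_pos hδ (thresholdRatio_pos hδ) (thresholdRatio_lt_one hn hδ.le))
      (sub_pos.2 (relativeDrop_thresholdRatio_lt_one hδ)))
    (by positivity)

theorem uniformGain_lt_one (hn : 0 < n) : uniformGain n δ < 1 :=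
  min_lt_of_right_lt <| (div_lt_one (by positivity)).2 <| by linarith

theorem le_one_sub_relativeDrop_mul (hδ : 0 ≤ δ) (hθ : 0 < θ) (hA : A ≤ θ * τ)
    (hS : S ≤ (1 + δ) * A - δ * τ) : S ≤ (1 - relativeDrop δ θ) * A :=
  calc
    S ≤ (1 + δ) * A - δ * τ := hS
    _ ≤ (1 + δ) * A - δ * (A / θ) := by
      gcongr
      exact (div_le_iff₀' hθ).2 hA
    _ = (1 - relativeDrop δ θ) * A := by
      rw [relativeDrop]
      field_simp
      ring

theorem one_add_div_one_sub_mul_le (hr : r < 1) (hS : S ≤ (1 - r) * A) :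
    (1 + r / (1 - r)) * S ≤ A := by
  have hr' : 0 < 1 - r := sub_pos.2 hr
  have inv_eq : 1 + r / (1 - r) = 1 / (1 - r) := by
    field_simp
    ring
  rwa [inv_eq, one_div_mul_eq_div, div_le_iff₀' hr']

theorem one_add_one_div_mul_le (hn : 0 ≤ n) (hS : S ≤ n / (n + 1) * τ) :
    (1 + 1 / (2 * n + 1)) * S ≤ 2 * n / (2 * n + 1) * τ :=
  calc
    (1 + 1 / (2 * n + 1)) * S ≤ (1 + 1 / (2 * n + 1)) * (n / (n + 1) * τ) := by gcongr
    _ = 2 * n / (2 * n + 1) * τ := by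
      field_simp
      ring

theorem one_add_uniformGain_mul_le (hn : 0 ≤ n) (hδ : 0 < δ) (hτ : 0 ≤ τ) (hS₀ : 0 ≤ S)
    (hSτ : S ≤ n / (n + 1) * τ) (hSA : S ≤ (1 + δ) * A - δ * τ) :
    (1 + uniformGain n δ) * S ≤ A := by
  rcases le_total A (thresholdRatio n δ * τ) with hA | hA
  · calc
      (1 + uniformGain n δ) * S
        ≤ (1 + relativeDrop δ (thresholdRatio n δ) /
            (1 - relativeDrop δ (thresholdRatio n δ))) * S := by
          gcongr
          exact min_le_left _ _
      _ ≤ A := one_add_div_one_sub_mul_le (relativeDrop_thresholdRatio_lt_one hδ)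
          (le_one_sub_relativeDrop_mul hδ.le (thresholdRatio_pos hδ) hA hSA)
  · calc
      (1 + uniformGain n δ) * S ≤ (1 + 1 / (2 * n + 1)) * S := by
          gcongr
          exact min_le_right _ _
      _ ≤ 2 * n / (2 * n + 1) * τ := one_add_one_div_mul_le hn hSτ
      _ ≤ thresholdRatio n δ * τ := by
          gcongr
          exact le_max_left _ _
      _ ≤ A := hA

theorem stmt_4_general (hn : 0 < n) (hδ : 0 < δ) (hS₀ : 0 ≤ S)
    (hSτ : S ≤ n / (n + 1) * τ) (hSA : S ≤ (1 + δ) * A - δ * τ) :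
    (0 < uniformGain n δ ∧ uniformGain n δ < 1) ∧ (1 + uniformGain n δ) * S ≤ A := by
  have hτ : 0 ≤ τ := nonneg_of_mul_nonneg_right (hS₀.trans hSτ) (by positivity)
  exact ⟨⟨uniformGain_pos hn.le hδ, uniformGain_lt_one hn⟩,
    one_add_uniformGain_mul_le hn.le hδ hτ hS₀ hSτ hSA⟩

end

theorem stmt_4 (n : ℕ) (hn : 1 ≤ n) (A τ S δ' : ℝ)
    (hA : 0 < A) (hτ : 0 < τ) (hS0 : 0 ≤ S)
    (hS : S ≤ ((n : ℝ) / ((n : ℝ) + 1)) * τ) (hδ' : 0 < δ')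
    (h1 : S ≤ (1 + δ') * A - δ' * τ) :
    (0 < min ((δ' * (1 - max ((2 * (n : ℝ)) / (2 * (n : ℝ) + 1)) ((2 * δ') / (2 * δ' + 1)))
          / max ((2 * (n : ℝ)) / (2 * (n : ℝ) + 1)) ((2 * δ') / (2 * δ' + 1)))
        / (1 - δ' * (1 - max ((2 * (n : ℝ)) / (2 * (n : ℝ) + 1)) ((2 * δ') / (2 * δ' + 1)))
          / max ((2 * (n : ℝ)) / (2 * (n : ℝ) + 1)) ((2 * δ') / (2 * δ' + 1))))
      (1 / (2 * (n : ℝ) + 1))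
     ∧ min ((δ' * (1 - max ((2 * (n : ℝ)) / (2 * (n : ℝ) + 1)) ((2 * δ') / (2 * δ' + 1)))
          / max ((2 * (n : ℝ)) / (2 * (n : ℝ) + 1)) ((2 * δ') / (2 * δ' + 1)))
        / (1 - δ' * (1 - max ((2 * (n : ℝ)) / (2 * (n : ℝ) + 1)) ((2 * δ') / (2 * δ' + 1)))
          / max ((2 * (n : ℝ)) / (2 * (n : ℝ) + 1)) ((2 * δ') / (2 * δ' + 1))))
      (1 / (2 * (n : ℝ) + 1)) < 1)
    ∧ (1 + min ((δ' * (1 - max ((2 * (n : ℝ)) / (2 * (n : ℝ) + 1)) ((2 * δ') / (2 * δ' + 1)))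
          / max ((2 * (n : ℝ)) / (2 * (n : ℝ) + 1)) ((2 * δ') / (2 * δ' + 1)))
        / (1 - δ' * (1 - max ((2 * (n : ℝ)) / (2 * (n : ℝ) + 1)) ((2 * δ') / (2 * δ' + 1)))
          / max ((2 * (n : ℝ)) / (2 * (n : ℝ) + 1)) ((2 * δ') / (2 * δ' + 1))))
      (1 / (2 * (n : ℝ) + 1))) * S ≤ A := by
  exact stmt_4_general (Nat.cast_pos.2 hn) hδ' hS0 hS h1
end

section
/- Let n ≥ 1 be an integer and let T be a set of triples (A, τ, S) of real numbers such that for every (A, τ, S) ∈ T one has A > 0, τ > 0, and τ/(n+1) ≤ S ≤ (n/(n+1))·τ. Then the following are equivalent: (i) there exists δ′ > 0 such that for every (A, τ, S) ∈ T, (1+δ′)·A − δ′·τ ≥ S; (ii) there exists ε′ > 0 such that for every (A, τ, S) ∈ T, A ≥ (1+ε′)·S. -/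
/-!
If `S ≤ c * τ` with `0 < c < 1`, then `τ` exceeds `S` by a fixed factor, so the summand `δ * τ` in
`S + δ * τ ≤ (1 + δ) * A` outweighs `δ * S` and leaves a definite multiple of `S` to spare.
Conversely, if `τ ≤ b * S`, then the surplus `ε * S` in `S + ε * S ≤ A` pays for `δ * τ`
as soon as `δ * b ≤ ε`.
-/

section OrderedField

variable {K : Type*} [Field K] [LinearOrder K] [IsStrictOrderedRing K]

theorem one_add_mul_le_of_le_one_add_mul_sub {A τ S c δ : K} (hc : 0 < c) (hδ : 0 ≤ δ)
    (hS : S ≤ c * τ) (h : S ≤ (1 + δ) * A - δ * τ) :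
    (1 + δ * (c⁻¹ - 1) / (1 + δ)) * S ≤ A := by
  have one_add_pos : 0 < 1 + δ := by positivity
  have inv_mul_le : c⁻¹ * S ≤ τ := (inv_mul_le_iff₀ hc).2 hS
  refine le_of_mul_le_mul_left ?_ one_add_pos
  calc (1 + δ) * ((1 + δ * (c⁻¹ - 1) / (1 + δ)) * S)
      = S + δ * (c⁻¹ * S) := by field_simp; ring
    _ ≤ S + δ * τ := by gcongr
    _ ≤ (1 + δ) * A := le_sub_iff_add_le.1 h

theorem le_one_add_mul_sub_of_one_add_mul_le {A τ S b ε : K} (hb : 0 < b) (hε : 0 ≤ ε)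
    (hA : 0 ≤ A) (hτ : τ / b ≤ S) (h : (1 + ε) * S ≤ A) :
    S ≤ (1 + ε / b) * A - ε / b * τ :=
  calc S = (1 + ε) * S - ε * S := by ring
    _ ≤ A - ε * (τ / b) := by gcongr
    _ = A - ε / b * τ := by ring
    _ ≤ (1 + ε / b) * A - ε / b * τ := by
      gcongr
      exact le_mul_of_one_le_left hA (le_add_of_nonneg_right (by positivity))

theorem stmt_5_general {ι : Type*} {T : Set ι} {A τ S : ι → K} {b c : K}
    (hb : 0 < b) (hc₀ : 0 < c) (hc₁ : c < 1) (hA : ∀ t ∈ T, 0 ≤ A t)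
    (hτ : ∀ t ∈ T, τ t / b ≤ S t) (hS : ∀ t ∈ T, S t ≤ c * τ t) :
    (∃ δ : K, 0 < δ ∧ ∀ t ∈ T, S t ≤ (1 + δ) * A t - δ * τ t) ↔
    (∃ ε : K, 0 < ε ∧ ∀ t ∈ T, (1 + ε) * S t ≤ A t) := by
  constructor
  · rintro ⟨δ, hδ, h⟩
    have gap_pos : 0 < c⁻¹ - 1 := sub_pos.2 ((one_lt_inv₀ hc₀).2 hc₁)
    exact ⟨δ * (c⁻¹ - 1) / (1 + δ), by positivity, fun t ht ↦
      one_add_mul_le_of_le_one_add_mul_sub hc₀ hδ.le (hS t ht) (h t ht)⟩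
  · rintro ⟨ε, hε, h⟩
    exact ⟨ε / b, by positivity, fun t ht ↦
      le_one_add_mul_sub_of_one_add_mul_le hb hε.le (hA t ht) (hτ t ht) (h t ht)⟩

end OrderedField

theorem stmt_5 (n : ℕ) (hn : 1 ≤ n) (T : Set (ℝ × ℝ × ℝ))
    (hT : ∀ t ∈ T, 0 < t.1 ∧ 0 < t.2.1 ∧
      t.2.1 / ((n : ℝ) + 1) ≤ t.2.2 ∧ t.2.2 ≤ ((n : ℝ) / ((n : ℝ) + 1)) * t.2.1) :
    (∃ δ' : ℝ, 0 < δ' ∧ ∀ t ∈ T, t.2.2 ≤ (1 + δ') * t.1 - δ' * t.2.1) ↔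
    (∃ ε' : ℝ, 0 < ε' ∧ ∀ t ∈ T, (1 + ε') * t.2.2 ≤ t.1) :=
  stmt_5_general (by positivity) (by positivity) ((div_lt_one (by positivity)).2 (lt_add_one _))
    (fun t ht ↦ (hT t ht).1.le) (fun t ht ↦ (hT t ht).2.2.1) (fun t ht ↦ (hT t ht).2.2.2)
end
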